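/- Fix integers j ≥ 0 and 0 ≤ i ≤ j, and let H(x) = (1/(j+1)!) · d/dx [x(x+1)(x+2)⋯(x+j)] be the derivative of the rising-factorial polynomial divided by (j+1)!. Then the i-th derivative of H satisfies, for all real x, d^i/dx^i H(x) = ((i+1)!/(j+1)!) · Σ_{t=0}^{j−i} C(i+t+1, i+1) · ⟦j+1, i+t+1⟧ · x^t, where C(a,b) is a binomial coefficient. -/

import Mathlib

/-- The `r`-Stirling numbers of the first kind `⟦n,k⟧_r`: `⟦r,r⟧_r = 1`,
`⟦n,k⟧_r = 0` if `n < r` or `k < r`, and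
`⟦n,k⟧_r = (n-1)·⟦n-1,k⟧_r + ⟦n-1,k-1⟧_r` for `n > r`. -/
def rStirling1 (r : ℕ) : ℕ → ℕ → ℕ
  | 0, k => if r = 0 ∧ k = 0 then 1 else 0
  | (n+1), k =>
    if n + 1 < r ∨ k < r then 0
    else if n + 1 = r then (if k = r then 1 else 0)
    else if k = 0 then 0
    else n * rStirling1 r n k + rStirling1 r n (k - 1)

/-- The (unsigned) Stirling numbers of the first kind. -/
def stirling1 : ℕ → ℕ → ℕ := rStirling1 0

/-!
The coefficients of the rising factorial `x(x+1)⋯(x+n-1)` are the Stirling numbers `⟦n,m⟧`, because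
multiplication by `x + n` acts on coefficients by their defining recurrence. Differentiating
`k` times turns `x ^ (t + k)` into `k! · C(t + k, k) · x ^ t`, and `H` is already a first
derivative, so its `i`-th derivative is the case `k = i + 1`.
-/

theorem stirling1_eq_stirlingFirst (n k : ℕ) : stirling1 n k = Nat.stirlingFirst n k := by
  induction n generalizing k with
  | zero => cases k <;> simp [stirling1, rStirling1]
  | succ n ih =>
    cases k with
    | zero => simp [stirling1, rStirling1]
    | succ k =>
      rw [Nat.stirlingFirst_succ_succ, ← ih, ← ih]
      simp [stirling1, rStirling1]

section

open Polynomial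

theorem ascPochhammer_coeff (R : Type*) [Semiring R] (n k : ℕ) :
    (ascPochhammer R n).coeff k = Nat.stirlingFirst n k := by
  induction n generalizing k with
  | zero => cases k <;> simp [coeff_one]
  | succ n ih =>
    rw [ascPochhammer_succ_right, mul_add, coeff_add, coeff_mul_natCast, ih]
    cases k with
    | zero => cases n <;> simp
    | succ k =>
      rw [coeff_mul_X, ih, Nat.stirlingFirst_succ_succ, Nat.cast_add, Nat.cast_mul,
        Nat.cast_comm, add_comm]

theorem ascPochhammer_eval_eq_prod_range {R : Type*} [CommSemiring R] (n : ℕ) (x : R) :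
    (ascPochhammer R n).eval x = ∏ t ∈ Finset.range n, (x + t) := by
  induction n with
  | zero => simp
  | succ n ih => rw [ascPochhammer_succ_eval, ih, Finset.prod_range_succ]

theorem eval_iterate_derivative_eq_sum_range {R : Type*} [Semiring R] (p : R[X]) (k : ℕ) (x : R) :
    (derivative^[k] p).eval x = k.factorial *
      ∑ t ∈ Finset.range (p.natDegree - k + 1), (t + k).choose k * p.coeff (t + k) * x ^ t := by
  rw [eval_eq_sum_range' (Nat.lt_succ_of_le (natDegree_iterate_derivative p k)), Finset.mul_sum]
  refine Finset.sum_congr rfl fun t _ => ?_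
  rw [coeff_iterate_derivative, Nat.descFactorial_eq_factorial_mul_choose, nsmul_eq_mul,
    Nat.cast_mul]
  simp only [mul_assoc]

theorem iteratedDeriv_polynomial_eval {𝕜 : Type*} [NontriviallyNormedField 𝕜] (p : 𝕜[X]) (k : ℕ) :
    iteratedDeriv k (fun x => p.eval x) = fun x => (derivative^[k] p).eval x := by
  induction k with
  | zero => simp
  | succ k ih =>
    ext x
    rw [iteratedDeriv_succ, ih, Polynomial.deriv, Function.iterate_succ_apply']

end

-- For `n < k` the truncated `n - k` leaves the single term `t = 0`, which vanishes: `⟦n,k⟧ = 0`.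
theorem stmt6_general {𝕜 : Type*} [NontriviallyNormedField 𝕜] (n k : ℕ) (x : 𝕜) :
    iteratedDeriv k (fun y : 𝕜 => ∏ t ∈ Finset.range n, (y + t)) x =
      k.factorial * ∑ t ∈ Finset.range (n - k + 1),
        ((t + k).choose k : 𝕜) * stirling1 n (t + k) * x ^ t := by
  simp_rw [← ascPochhammer_eval_eq_prod_range, iteratedDeriv_polynomial_eval,
    eval_iterate_derivative_eq_sum_range, ascPochhammer_natDegree, ascPochhammer_coeff,
    stirling1_eq_stirlingFirst]

theorem stmt6 (j i : ℕ) (h : i ≤ j) (H : ℝ → ℝ)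
    (hH : H = fun x : ℝ =>
      (1 / (j + 1).factorial) * deriv (fun y : ℝ => ∏ t ∈ Finset.range (j + 1), (y + t)) x) :
    ∀ x : ℝ, iteratedDeriv i H x =
      ((i + 1).factorial / (j + 1).factorial) *
        ∑ t ∈ Finset.range (j - i + 1),
          ((i + t + 1).choose (i + 1) : ℝ) * stirling1 (j + 1) (i + t + 1) * x ^ t := by
  intro x
  rw [hH, iteratedDeriv_const_mul_field, ← iteratedDeriv_succ', stmt6_general,
    Nat.add_sub_add_right, ← mul_assoc, one_div_mul_eq_div]
  simp only [← add_assoc, add_comm _ i]
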